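/- Let G = GP(Γ, 𝒢) be a non-degenerate graph product and H ≤ G a subgroup. If the sub-graph product induced by the essential support esupp(H) contains a pair of separated vertices, then H is either acylindrically arboreal or virtually cyclic. -/

import Mathlib

/-- An action of a group `G` by simplicial isometries (automorphisms) on a simplicial
tree, i.e. a connected acyclic simple graph, with the natural edge metric. -/
structure TreeAction (G : Type*) [Group G] where
  V : Type
  T : SimpleGraph V
  isTree : T.IsTree
  act : G →* (T ≃g T)

namespace TreeAction

variable {G : Type*} [Group G] (A : TreeAction G)

/-- The action fixes a point of the tree (the action is elliptic). -/
def FixesPoint : Prop := ∃ x : A.V, ∀ g : G, A.act g x = x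

/-- An element is elliptic if it fixes a point of the tree. -/
def Elliptic (g : G) : Prop := ∃ x : A.V, A.act g x = x

/-- The action has bounded orbits. -/
def BoundedOrbits : Prop := ∃ (x : A.V) (B : ℕ), ∀ g : G, A.T.dist x (A.act g x) ≤ B

/-- `(k, C)`-acylindricity: the pointwise stabiliser of any geodesic edge path of length
at least `k` (equivalently, in a tree, the common stabiliser of two points at distance
at least `k`) has at most `C` elements. -/
def KCAcylindrical (k C : ℕ) : Prop :=
  ∀ x y : A.V, k ≤ A.T.dist x y →
    {g : G | A.act g x = x ∧ A.act g y = y}.Finite ∧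
      {g : G | A.act g x = x ∧ A.act g y = y}.ncard ≤ C

/-- An action on a tree is acylindrical if it is `(k, C)`-acylindrical for some `k ≥ 0`,
`C ≥ 1`. -/
def Acylindrical : Prop := ∃ k C : ℕ, 1 ≤ C ∧ A.KCAcylindrical k C

/-- Bowditch's definition of acylindricity for the action on the tree. -/
def BowditchAcylindrical : Prop :=
  ∀ ε : ℕ, ∃ R N : ℕ, ∀ x y : A.V, R ≤ A.T.dist x y →
    {g : G | A.T.dist x (A.act g x) ≤ ε ∧ A.T.dist y (A.act g y) ≤ ε}.Finite ∧
      {g : G | A.T.dist x (A.act g x) ≤ ε ∧ A.T.dist y (A.act g y) ≤ ε}.ncard ≤ N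

end TreeAction

/-- A group is virtually cyclic if it has a cyclic subgroup of finite index. -/
def IsVirtuallyCyclic (G : Type*) [Group G] : Prop :=
  ∃ H : Subgroup G, H.FiniteIndex ∧ IsCyclic H

namespace TreeAction

variable {G : Type*} [Group G] (A : TreeAction G)

/-- The action is non-elementary: unbounded orbits and the group is not virtually
cyclic. -/
def NonElementary : Prop := ¬ A.BoundedOrbits ∧ ¬ IsVirtuallyCyclic G

/-- The action fixes a bi-infinite geodesic line setwise. -/
def FixesLine : Prop :=
  ∃ ℓ : ℤ → A.V, (∀ m n : ℤ, (A.T.dist (ℓ m) (ℓ n) : ℤ) = |m - n|) ∧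
    ∀ g : G, (fun v => A.act g v) '' Set.range ℓ = Set.range ℓ

end TreeAction

/-- A group is acylindrically arboreal if it admits a non-elementary acylindrical
action on a simplicial tree. -/
def AcylindricallyArboreal (G : Type*) [Group G] : Prop :=
  ∃ A : TreeAction G, A.Acylindrical ∧ A.NonElementary

/-- Property (FA⁻): every action on a simplicial tree either fixes a point or fixes a
bi-infinite geodesic setwise. -/
def PropertyFAMinus (G : Type*) [Group G] : Prop :=
  ∀ A : TreeAction G, A.FixesPoint ∨ A.FixesLine

section GraphProduct

variable {V : Type} (Γ : SimpleGraph V) (Gv : V → Type) [∀ v, Group (Gv v)]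

/-- The commutation relators defining a graph product: for each edge `{u, v}` of `Γ`,
the elements of `G_u` commute with the elements of `G_v` inside the free product. -/
def graphProductRels : Set (Monoid.CoprodI Gv) :=
  {x | ∃ (u v : V), Γ.Adj u v ∧ ∃ (a : Gv u) (b : Gv v),
    x = Monoid.CoprodI.of a * Monoid.CoprodI.of b *
      (Monoid.CoprodI.of a)⁻¹ * (Monoid.CoprodI.of b)⁻¹}

/-- The graph product of the groups `Gv` over the finite simple graph `Γ`: the free
product of the vertex groups modulo commutation of adjacent vertex groups. -/
def GraphProduct : Type :=
  Monoid.CoprodI Gv ⧸ Subgroup.normalClosure (graphProductRels Γ Gv)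

instance : Group (GraphProduct Γ Gv) :=
  inferInstanceAs (Group (Monoid.CoprodI Gv ⧸ Subgroup.normalClosure (graphProductRels Γ Gv)))

/-- The canonical map of a vertex group into the graph product. -/
def GraphProduct.of (v : V) : Gv v →* GraphProduct Γ Gv :=
  (QuotientGroup.mk' _).comp Monoid.CoprodI.of

/-- The full subgroup on a set `S` of vertices: the subgroup generated by the vertex
groups of the vertices in `S`. -/
def GraphProduct.full (S : Set V) : Subgroup (GraphProduct Γ Gv) :=
  ⨆ v ∈ S, (GraphProduct.of Γ Gv v).range

/-- A graph product is non-degenerate if all vertex groups are nontrivial and `Γ` has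
more than one vertex. -/
def GraphProduct.NonDegenerate : Prop :=
  (∀ v, Nontrivial (Gv v)) ∧ Nontrivial V

/-- The conjugate `g H g⁻¹` of a subgroup. -/
def conjSubgroup {G : Type*} [Group G] (g : G) (H : Subgroup G) : Subgroup G :=
  H.map (MulAut.conj g).toMonoidHom

/-- Edge distance at least `n` between two vertices of a graph (with the convention
that vertices in different components are at infinite distance). -/
def SimpleGraph.distAtLeast (n : ℕ) (a b : V) : Prop :=
  a ≠ b ∧ (¬ Γ.Reachable a b ∨ n ≤ Γ.dist a b)

/-- Two vertices are separated (w.r.t. the graph product) if their edge distance is at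
least 2 and the full subgroup on the intersection of their links is finite. -/
def GraphProduct.SeparatedPair (a b : V) : Prop :=
  a ≠ b ∧ ¬ Γ.Adj a b ∧
    Finite (GraphProduct.full Γ Gv (Γ.neighborSet a ∩ Γ.neighborSet b))

/-- The graph-theoretic diameter of `Γ` is at least `n`. -/
def SimpleGraph.diamAtLeast (n : ℕ) : Prop := ∃ a b : V, Γ.distAtLeast n a b

end GraphProduct

/-- `S` is the essential support of a subgroup `H` of a graph product: `H` is
contained in a conjugate of the full subgroup on `S`, and `S` is contained in any
vertex set with this property (so that the parabolic closure of `H` is a conjugate of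
`G_S`). -/
def GraphProduct.IsEssentialSupport {V : Type} (Γ : SimpleGraph V) (Gv : V → Type)
    [∀ v, Group (Gv v)] (H : Subgroup (GraphProduct Γ Gv)) (S : Set V) : Prop :=
  (∃ g : GraphProduct Γ Gv, H ≤ conjSubgroup g (GraphProduct.full Γ Gv S)) ∧
    ∀ (S' : Set V) (g' : GraphProduct Γ Gv),
      H ≤ conjSubgroup g' (GraphProduct.full Γ Gv S') → S ⊆ S'

/-!
If `a` and `b` are not adjacent, no edge of `Γ` contains both, so `G` is the amalgamated product of
`G_{V ∖ a}` and `G_{V ∖ b}`; let `H` act on the Bass–Serre tree of this splitting. A segment of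
length `3` contains two distinct cosets of each factor. Since `G` is also the amalgamated product of
`G_{V ∖ v}` and `G_{star v}` over `G_{link v}`, the stabilizers of two distinct cosets of
`G_{V ∖ v}` meet in a subgroup of a conjugate of `G_{link v}`. As intersections of parabolic
subgroups are controlled by retractions, the stabilizer in `H` of such a segment lies in a conjugate
of the finite group `G_{link a ∩ link b ∩ S}`, so the action is acylindrical. A bounded orbit would
yield a fixed vertex and so put `H` into a conjugate of `G_{V ∖ a}` or `G_{V ∖ b}`, contradicting
`a, b ∈ S = esupp H`.
-/

open Sum MulAction
open scoped Pointwise symmDiff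

/-! ### Trees -/

section Trees

variable {V W : Type*} {T : SimpleGraph V} {T' : SimpleGraph W}

theorem isAcyclic_of_forall_adj_exists_separating_set
    (h : ∀ x y, T.Adj x y → ∃ U : Set V, x ∈ U ∧ y ∉ U ∧
      ∀ u w, T.Adj u w → u ∈ U → w ∉ U → s(u, w) = s(x, y)) :
    T.IsAcyclic := by
  refine SimpleGraph.isAcyclic_iff_forall_adj_isBridge.2 fun x y hxy => ?_
  obtain ⟨U, hx, hy, hU⟩ := h x y hxy
  refine SimpleGraph.isBridge_iff_forall_walk_mem_edges.2 fun p => ?_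
  obtain ⟨d, hd, hfst, hsnd⟩ := p.exists_boundary_dart U hx hy
  exact hU _ _ d.adj hfst hsnd ▸ List.mem_map_of_mem hd

theorem dist_map_iso (e : T ≃g T') (x y : V) : T'.dist (e x) (e y) = T.dist x y := by
  rw [SimpleGraph.dist_eq_sInf, SimpleGraph.dist_eq_sInf]
  congr 1
  ext n
  constructor
  · rintro ⟨p, rfl⟩
    exact ⟨(p.map e.symm.toHom).copy (e.symm_apply_apply x) (e.symm_apply_apply y), by simp⟩
  · rintro ⟨p, rfl⟩
    exact ⟨p.map e.toHom, by simp⟩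

theorem walk_eq_of_isPath (hT : T.IsAcyclic) {x y : V} {p q : T.Walk x y} (hp : p.IsPath)
    (hq : q.IsPath) : p = q :=
  congrArg Subtype.val ((hT.subsingleton_path x y).elim ⟨p, hp⟩ ⟨q, hq⟩)

theorem map_eq_of_mem_support (hT : T.IsAcyclic) (e : T ≃g T) {x y z : V} {p : T.Walk x y}
    (hp : p.IsPath) (hx : e x = x) (hy : e y = y) (hz : z ∈ p.support) : e z = z := by
  have hmap : ((p.map e.toHom).copy hx hy).IsPath := by
    simpa using SimpleGraph.Walk.IsPath.map e.injective hp
  have heq := walk_eq_of_isPath hT hmap hp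
  obtain ⟨n, rfl, -⟩ := SimpleGraph.Walk.mem_support_iff_exists_getVert.1 hz
  simpa [SimpleGraph.Walk.getVert_map] using congrArg (fun q => q.getVert n) heq

theorem length_eq_dist_of_isPath (hT : T.IsAcyclic) {x y : V} {p : T.Walk x y} (hp : p.IsPath) :
    p.length = T.dist x y := by
  obtain ⟨q, hq, hlen⟩ := p.reachable.exists_path_of_dist
  rw [← hlen, walk_eq_of_isPath hT hp hq]

theorem dist_eq_dist_add_dist_of_mem_support (hT : T.IsAcyclic) {x y m : V} {p : T.Walk x y}
    (hp : p.IsPath) (hm : m ∈ p.support) : T.dist x y = T.dist x m + T.dist m y := by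
  classical
  rw [← length_eq_dist_of_isPath hT hp, ← length_eq_dist_of_isPath hT (hp.takeUntil hm),
    ← length_eq_dist_of_isPath hT (hp.dropUntil hm), ← SimpleGraph.Walk.length_append,
    SimpleGraph.Walk.take_spec]

theorem dist_eq_dist_add_dist_or_of_mem_support (hT : T.IsTree) {x y m : V} {p : T.Walk x y}
    (hp : p.IsPath) (hm : m ∈ p.support) (o : V) :
    T.dist x o = T.dist x m + T.dist m o ∨ T.dist y o = T.dist y m + T.dist m o := by
  classical
  obtain ⟨q, hq, -⟩ := hT.existsUnique_path x o
  obtain ⟨q', hq', -⟩ := hT.existsUnique_path y o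
  have hp_eq := walk_eq_of_isPath hT.isAcyclic hp (q.append q'.reverse).bypass_isPath
  have hm' : m ∈ q.support ∨ m ∈ q'.support := by
    have := SimpleGraph.Walk.support_bypass_subset_support _ (hp_eq ▸ hm)
    rwa [SimpleGraph.Walk.mem_support_append_iff, SimpleGraph.Walk.support_reverse,
      List.mem_reverse] at this
  exact hm'.imp (dist_eq_dist_add_dist_of_mem_support hT.isAcyclic hq)
    (dist_eq_dist_add_dist_of_mem_support hT.isAcyclic hq')

/- If two points realising the radius of `s` had a vertex strictly between them, that vertex would
see `s` within a smaller radius. -/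
theorem eq_or_adj_of_forall_dist_le (hT : T.IsTree) {s : Set V} (hs : s.Nonempty) {r : ℕ}
    (hr : ∀ x n, (∀ o ∈ s, T.dist x o ≤ n) → r ≤ n) {x y : V}
    (hx : ∀ o ∈ s, T.dist x o ≤ r) (hy : ∀ o ∈ s, T.dist y o ≤ r) : x = y ∨ T.Adj x y := by
  by_contra! hxy
  obtain ⟨p, hp, -⟩ := hT.existsUnique_path x y
  cases p with
  | nil => exact hxy.1 rfl
  | @cons _ m _ hadj q =>
    have hmy : y ≠ m := by rintro rfl; exact hxy.2 hadj
    have hlt : ∀ o ∈ s, T.dist m o < r := fun o ho => by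
      have hxm := hT.connected.pos_dist_of_ne hadj.ne
      have hym := hT.connected.pos_dist_of_ne hmy
      have hxo := hx o ho
      have hyo := hy o ho
      rcases dist_eq_dist_add_dist_or_of_mem_support hT hp (m := m) (by simp) o with h | h <;> omega
    obtain ⟨o, ho⟩ := hs
    have hr_le := hr m (r - 1) fun o ho => Nat.le_sub_one_of_lt (hlt o ho)
    have hr_pos := hlt o ho
    omega

end Trees

namespace TreeAction

variable {G : Type*} [Group G] (A : TreeAction G)

/-- The action is without inversions: no element exchanges the endpoints of an edge. -/
def WithoutInversions : Prop :=
  ∀ (g : G) (x y : A.V), A.T.Adj x y → ¬ (A.act g x = y ∧ A.act g y = x)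

variable {A}

theorem fixesPoint_of_boundedOrbits (hA : A.WithoutInversions) (hb : A.BoundedOrbits) :
    A.FixesPoint := by
  classical
  obtain ⟨x, B, hB⟩ := hb
  let s : Set A.V := Set.range fun g => A.act g x
  have hex : ∃ r v, ∀ o ∈ s, A.T.dist v o ≤ r := ⟨B, x, by rintro _ ⟨g, rfl⟩; exact hB g⟩
  obtain ⟨v, hv⟩ := Nat.find_spec hex
  have heq_or_adj {y z : A.V} := eq_or_adj_of_forall_dist_le A.isTree (Set.range_nonempty _)
    (fun w n hw => Nat.find_min' hex ⟨w, hw⟩) (x := y) (y := z)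
  have hcenter (g : G) {w : A.V} (hw : ∀ o ∈ s, A.T.dist w o ≤ Nat.find hex) :
      ∀ o ∈ s, A.T.dist (A.act g w) o ≤ Nat.find hex := by
    rintro _ ⟨k, rfl⟩
    have hk : A.act g (A.act (g⁻¹ * k) x) = A.act k x := by
      rw [← RelIso.mul_apply, ← map_mul, mul_inv_cancel_left]
    exact (hk ▸ dist_map_iso (A.act g) w _).trans_le (hw _ ⟨_, rfl⟩)
  refine ⟨v, fun g => (heq_or_adj (hcenter g hv) hv).resolve_right fun hadj => ?_⟩
  have hadj' : A.T.Adj (A.act g (A.act g v)) (A.act g v) := (A.act g).map_adj_iff.2 hadj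
  rcases heq_or_adj (hcenter g (hcenter g hv)) hv with h | h
  · exact hA g v _ hadj.symm ⟨rfl, h⟩
  · exact A.isTree.isAcyclic.cliqueFree le_rfl _
      (SimpleGraph.is3Clique_triple_iff.2 ⟨h, hadj', hadj.symm⟩)

end TreeAction

/-! ### Conjugates and coset stabilizers -/

section Stabilizers

variable {G : Type*} [Group G] {A B : Subgroup G}

theorem mem_conjSubgroup {g x : G} : x ∈ conjSubgroup g A ↔ g⁻¹ * x * g ∈ A := by
  constructor
  · rintro ⟨y, hy, rfl⟩
    simpa [mul_assoc] using hy
  · exact fun hx => ⟨_, hx, by simp [mul_assoc]⟩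

theorem conjSubgroup_inf (g : G) :
    conjSubgroup g (A ⊓ B) = conjSubgroup g A ⊓ conjSubgroup g B :=
  Subgroup.map_inf _ _ _ (MulAut.conj g).injective

theorem stabilizer_mk (g : G) : stabilizer G (g : G ⧸ A) = conjSubgroup g A := by
  ext x
  rw [mem_stabilizer_iff, mem_conjSubgroup, eq_comm]
  simp [QuotientGroup.eq, mul_assoc]

theorem stabilizer_inl {X Y : Type*} [MulAction G X] [MulAction G Y] (x : X) :
    stabilizer G (inl x : X ⊕ Y) = stabilizer G x := by
  ext; simp

theorem stabilizer_inr {X Y : Type*} [MulAction G X] [MulAction G Y] (y : Y) :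
    stabilizer G (inr y : X ⊕ Y) = stabilizer G y := by
  ext; simp

end Stabilizers

/-! ### Amalgamated products and their Bass–Serre trees -/

section Generation

variable {G : Type*} [Group G] {A B : Subgroup G}

theorem mul_induction_of_sup_eq_top (h : A ⊔ B = ⊤) {P : G → Prop} (one : P 1)
    (left : ∀ a ∈ A, ∀ x, P x → P (a * x)) (right : ∀ b ∈ B, ∀ x, P x → P (b * x)) (g : G) :
    P g := by
  have hg : g ∈ Subgroup.closure ((A : Set G) ∪ B) := by
    rw [← Subgroup.sup_eq_closure, h]
    exact Subgroup.mem_top g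
  induction hg using Subgroup.closure_induction_left with
  | one => exact one
  | mul_left a ha x _ hx => exact ha.elim (left a · x hx) (right a · x hx)
  | inv_mul_cancel a ha x _ hx =>
    exact ha.elim (fun ha => left a⁻¹ (A.inv_mem ha) x hx) fun ha => right a⁻¹ (B.inv_mem ha) x hx

theorem mk_eq_mk_one_of_mem {a : G} (ha : a ∈ A) : (a : G ⧸ A) = (1 : G) := by
  simpa using QuotientGroup.mk_mul_of_mem 1 ha

variable (A B) in
/-- The coset graph of `A` and `B`, with an edge from `gA` to `gB` for every `g`. It is the
Bass–Serre tree of the splitting when `G` is the amalgamated product of `A` and `B`. -/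
def bassSerreGraph : SimpleGraph ((G ⧸ A) ⊕ (G ⧸ B)) where
  Adj x y := ∃ g : G, s(inl ↑g, inr ↑g) = s(x, y)
  symm := ⟨fun _ _ ⟨g, hg⟩ => ⟨g, hg.trans Sym2.eq_swap⟩⟩
  loopless := ⟨fun x ⟨g, hg⟩ => by rcases Sym2.eq_iff.1 hg with ⟨rfl, h⟩ | ⟨rfl, h⟩ <;> cases h⟩

theorem bassSerreGraph_adj_inl_inr (g : G) :
    (bassSerreGraph A B).Adj (inl ↑g) (inr ↑g) :=
  ⟨g, rfl⟩

theorem isLeft_ne_of_bassSerreGraph_adj {x y : (G ⧸ A) ⊕ (G ⧸ B)}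
    (h : (bassSerreGraph A B).Adj x y) : x.isLeft ≠ y.isLeft := by
  obtain ⟨g, hg⟩ := h
  rcases Sym2.eq_iff.1 hg with ⟨rfl, rfl⟩ | ⟨rfl, rfl⟩ <;> simp

theorem bassSerreGraph_adj_smul (g : G) {x y : (G ⧸ A) ⊕ (G ⧸ B)}
    (h : (bassSerreGraph A B).Adj x y) : (bassSerreGraph A B).Adj (g • x) (g • y) := by
  obtain ⟨k, hk⟩ := h
  exact ⟨g * k, by simpa using congrArg (Sym2.map (g • ·)) hk⟩

theorem exists_eq_inl_inr_of_bassSerreGraph_adj {x y : (G ⧸ A) ⊕ (G ⧸ B)}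
    (h : (bassSerreGraph A B).Adj x y) :
    ∃ u w, (x = inl u ∧ y = inr w) ∨ (x = inr w ∧ y = inl u) := by
  obtain ⟨g, hg⟩ := h
  exact ⟨g, g, (Sym2.eq_iff.1 hg.symm)⟩

variable (A B) in
/-- The action of `G` on the Bass–Serre graph by left translation of cosets. -/
def bassSerreAction : G →* (bassSerreGraph A B ≃g bassSerreGraph A B) where
  toFun g :=
    { MulAction.toPerm g with
      map_rel_iff' := ⟨fun h => by simpa using bassSerreGraph_adj_smul g⁻¹ h,
        bassSerreGraph_adj_smul g⟩ }
  map_one' := by ext x : 1; exact one_smul G x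
  map_mul' g k := by ext x : 1; exact mul_smul g k x

theorem bassSerreGraph_connected (h : A ⊔ B = ⊤) : (bassSerreGraph A B).Connected := by
  have hreach : ∀ g : G, (bassSerreGraph A B).Reachable (inl ↑(1 : G)) (inl ↑g) := by
    refine mul_induction_of_sup_eq_top h .rfl (fun a ha x hx => ?_) fun b hb x hx => ?_
    · have hax : (bassSerreGraph A B).Reachable (inl ↑a) (inl ↑(a * x)) := by
        simpa [bassSerreAction] using hx.map (bassSerreAction A B a).toHom
      rwa [mk_eq_mk_one_of_mem ha] at hax
    · have hbx : (bassSerreGraph A B).Reachable (inl ↑b) (inl ↑(b * x)) := by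
        simpa [bassSerreAction] using hx.map (bassSerreAction A B b).toHom
      have hb_adj := bassSerreGraph_adj_inl_inr (A := A) (B := B) b
      rw [mk_eq_mk_one_of_mem hb] at hb_adj
      exact (bassSerreGraph_adj_inl_inr 1).reachable.trans (hb_adj.symm.reachable.trans hbx)
  refine (SimpleGraph.connected_iff_exists_forall_reachable _).2 ⟨inl ↑(1 : G), ?_⟩
  rintro (x | x) <;> obtain ⟨g, rfl⟩ := QuotientGroup.mk_surjective x
  · exact hreach g
  · exact (hreach g).trans (bassSerreGraph_adj_inl_inr g).reachable

end Generation

section Amalgam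

universe u

variable {G : Type u} [Group G] {A B : Subgroup G}

variable (A B) in
/-- `G` is the amalgamated product of its subgroups `A` and `B` over `A ⊓ B`, expressed by the
universal property of the pushout, tested against groups in the universe of `G`. -/
structure IsAmalgam : Prop where
  sup_eq_top : A ⊔ B = ⊤
  exists_lift : ∀ {N : Type u} [Group N] (f : A →* N) (f' : B →* N),
    f.comp (Subgroup.inclusion (inf_le_left : A ⊓ B ≤ A)) =
        f'.comp (Subgroup.inclusion (inf_le_right : A ⊓ B ≤ B)) →
      ∃ F : G →* N, F.comp A.subtype = f ∧ F.comp B.subtype = f'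

namespace IsAmalgam

/- `A` acts on sets of edges by translation and `B` by translation conjugated by the flip of the
base edge; the universal property glues the two actions. -/
theorem exists_affine_action (h : IsAmalgam A B) :
    ∃ ρ : G →* Equiv.Perm (Set (G ⧸ A ⊓ B)), (∀ a ∈ A, ρ a ∅ = ∅) ∧
      (∀ b ∈ B, ρ b {↑(1 : G)} = {↑(1 : G)}) ∧ ∀ g s t, ρ g s ∆ ρ g t = g • (s ∆ t) := by
  let δ : Set (G ⧸ A ⊓ B) := {↑(1 : G)}
  let τ : Equiv.Perm (Set (G ⧸ A ⊓ B)) := (symmDiff_right_involutive δ).toPerm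
  let f := MulAction.toPermHom G (Set (G ⧸ A ⊓ B))
  obtain ⟨ρ, hρA, hρB⟩ := h.exists_lift (f.comp A.subtype)
    (((MulAut.conj τ).toMonoidHom.comp f).comp B.subtype) (by
      ext c s : 2
      change c.1 • s = δ ∆ (c.1 • (δ ∆ s))
      have hc : c.1 • δ = δ := by
        simpa [δ, Set.smul_set_singleton] using mk_eq_mk_one_of_mem c.2
      rw [Set.smul_set_symmDiff, hc, symmDiff_symmDiff_cancel_left])
  have hA (a) (ha : a ∈ A) (s) : ρ a s = a • s := congr($hρA ⟨a, ha⟩ s)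
  have hB (b) (hb : b ∈ B) (s) : ρ b s = δ ∆ (b • (δ ∆ s)) := congr($hρB ⟨b, hb⟩ s)
  refine ⟨ρ, fun a ha => by simp [hA a ha], fun b hb => by simp [hB b hb, δ], ?_⟩
  refine mul_induction_of_sup_eq_top h.sup_eq_top (by simp) (fun a ha x hx s t => ?_)
    fun b hb x hx s t => ?_
  · rw [map_mul, Equiv.Perm.mul_apply, Equiv.Perm.mul_apply, hA a ha, hA a ha,
      ← Set.smul_set_symmDiff, hx, mul_smul]
  · rw [map_mul, Equiv.Perm.mul_apply, Equiv.Perm.mul_apply, hB b hb, hB b hb,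
      symmDiff_symmDiff_symmDiff_comm, symmDiff_self, bot_symmDiff, ← Set.smul_set_symmDiff,
      symmDiff_symmDiff_symmDiff_comm, symmDiff_self, bot_symmDiff, hx, mul_smul]

/- `σ x` is the set of edges that separate `x` from the base vertex, an edge `gA — gB` being
encoded by the coset of `g` modulo `A ⊓ B`. -/
theorem exists_separating_edges (h : IsAmalgam A B) :
    ∃ σ : (G ⧸ A) ⊕ (G ⧸ B) → Set (G ⧸ A ⊓ B), ∀ g : G, σ (inl ↑g) ∆ σ (inr ↑g) = {↑g} := by
  obtain ⟨ρ, hρA, hρB, hρ⟩ := h.exists_affine_action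
  have heq_of_leftRel {C : Subgroup G} {s : Set (G ⧸ A ⊓ B)} (hC : ∀ c ∈ C, ρ c s = s) (x y : G)
      (hxy : QuotientGroup.leftRel C x y) : ρ x s = ρ y s := by
    have hy := hC _ (QuotientGroup.leftRel_apply.1 hxy)
    rw [map_mul, map_inv, Equiv.Perm.mul_apply, Equiv.Perm.inv_eq_iff_eq] at hy
    exact hy.symm
  refine ⟨Sum.elim (Quotient.lift (ρ · ∅) (heq_of_leftRel hρA))
    (Quotient.lift (ρ · {↑(1 : G)}) (heq_of_leftRel hρB)), fun g => ?_⟩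
  change ρ g ∅ ∆ ρ g {↑(1 : G)} = {↑g}
  simp [hρ, ← Set.bot_eq_empty, Set.smul_set_singleton]

theorem bassSerreGraph_isAcyclic (h : IsAmalgam A B) : (bassSerreGraph A B).IsAcyclic := by
  obtain ⟨σ, hσ⟩ := h.exists_separating_edges
  have hσ_adj {g : G} {x y} (hxy : s(inl ↑g, inr ↑g) = s(x, y)) : σ x ∆ σ y = {↑g} := by
    rcases Sym2.eq_iff.1 hxy with ⟨rfl, rfl⟩ | ⟨rfl, rfl⟩
    · exact hσ g
    · rw [symmDiff_comm, hσ]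
  have hmem_iff {g k : G} {x y} (hxy : s(inl ↑g, inr ↑g) = s(x, y)) :
      (k : G ⧸ A ⊓ B) = g ↔ ¬ (↑k ∈ σ x ↔ ↑k ∈ σ y) := by
    rw [← Set.mem_singleton_iff, ← hσ_adj hxy, Set.mem_symmDiff]
    tauto
  refine isAcyclic_of_forall_adj_exists_separating_set fun x y ⟨g, hg⟩ =>
    ⟨{z | (g : G ⧸ A ⊓ B) ∈ σ z ↔ (g : G ⧸ A ⊓ B) ∈ σ x}, Iff.rfl, ?_, fun u w ⟨k, hk⟩ hu hw => ?_⟩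
  · exact fun hy => (hmem_iff hg).1 rfl hy.symm
  · have hkg : (g : G ⧸ A ⊓ B) = k := (hmem_iff hk).2 fun huw => hw (huw.symm.trans hu)
    obtain ⟨hA, hB⟩ := QuotientGroup.eq.1 hkg
    rw [← hk, ← hg, QuotientGroup.eq.2 hA, QuotientGroup.eq.2 hB]

theorem bassSerreGraph_isTree (h : IsAmalgam A B) : (bassSerreGraph A B).IsTree :=
  ⟨bassSerreGraph_connected h.sup_eq_top, h.bassSerreGraph_isAcyclic⟩

theorem stabilizer_inf_stabilizer_le_of_mem_support (h : IsAmalgam A B)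
    {x y z : (G ⧸ A) ⊕ (G ⧸ B)} {p : (bassSerreGraph A B).Walk x y} (hp : p.IsPath)
    (hz : z ∈ p.support) : stabilizer G x ⊓ stabilizer G y ≤ stabilizer G z :=
  fun g ⟨hx, hy⟩ =>
    map_eq_of_mem_support h.bassSerreGraph_isAcyclic (bassSerreAction A B g) hp hx hy hz

theorem exists_stabilizer_inf_stabilizer_le_conjSubgroup (h : IsAmalgam A B) {x y : G ⧸ A}
    (hxy : x ≠ y) : ∃ g, stabilizer G x ⊓ stabilizer G y ≤ conjSubgroup g (A ⊓ B) := by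
  obtain ⟨p, hp, -⟩ := h.bassSerreGraph_isTree.existsUnique_path (inl x) (inl y)
  cases p with
  | nil => exact absurd rfl hxy
  | @cons _ m _ hadj q =>
    have hm := h.stabilizer_inf_stabilizer_le_of_mem_support hp (z := m) (by simp)
    obtain ⟨g, hg⟩ := hadj
    obtain ⟨rfl, rfl⟩ : (g : G ⧸ A) = x ∧ inr ↑g = m := by simpa using Sym2.eq_iff.1 hg
    simp only [stabilizer_inl, stabilizer_inr] at hm
    refine ⟨g, ?_⟩
    rw [conjSubgroup_inf, ← stabilizer_mk, ← stabilizer_mk]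
    exact le_inf inf_le_left hm

theorem exists_ne_stabilizer_le_of_three_le_dist (h : IsAmalgam A B) {x y : (G ⧸ A) ⊕ (G ⧸ B)}
    (hxy : 3 ≤ (bassSerreGraph A B).dist x y) :
    ∃ (u u' : G ⧸ A) (w w' : G ⧸ B), u ≠ u' ∧ w ≠ w' ∧ stabilizer G x ⊓ stabilizer G y ≤
      (stabilizer G u ⊓ stabilizer G u') ⊓ (stabilizer G w ⊓ stabilizer G w') := by
  obtain ⟨p, hp, hlen⟩ :=
    (h.bassSerreGraph_isTree.connected.preconnected x y).exists_path_of_dist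
  rw [← hlen] at hxy
  have hle (i : ℕ) := h.stabilizer_inf_stabilizer_le_of_mem_support hp (p.getVert_mem_support i)
  have hle_inl {i u} (hi : p.getVert i = inl u) := (hi ▸ hle i).trans_eq (stabilizer_inl u)
  have hle_inr {i w} (hi : p.getVert i = inr w) := (hi ▸ hle i).trans_eq (stabilizer_inr w)
  have hne {i j : ℕ} (hi : i ≤ 3) (hj : j ≤ 3) (hij : i ≠ j) : p.getVert i ≠ p.getVert j :=
    fun heq => hij (hp.getVert_injOn (hi.trans hxy) (hj.trans hxy) heq)
  have hadj {i : ℕ} (hi : i < 3) := p.adj_getVert_succ (hi.trans_le hxy)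
  obtain ⟨u, w, h01⟩ := exists_eq_inl_inr_of_bassSerreGraph_adj (hadj (i := 0) (by simp))
  obtain ⟨u', w', h23⟩ := exists_eq_inl_inr_of_bassSerreGraph_adj (hadj (i := 2) (by simp))
  have h12 := isLeft_ne_of_bassSerreGraph_adj (hadj (i := 1) (by simp))
  refine ⟨u, u', w, w', ?_⟩
  rcases h01 with ⟨h0, h1⟩ | ⟨h0, h1⟩ <;> rcases h23 with ⟨h2, h3⟩ | ⟨h2, h3⟩
  · exact ⟨fun hu => hne (by simp) (by simp) (by simp) (h0.trans ((congrArg inl hu).trans h2.symm)),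
      fun hw => hne (by simp) (by simp) (by simp) (h1.trans ((congrArg inr hw).trans h3.symm)),
      le_inf (le_inf (hle_inl h0) (hle_inl h2)) (le_inf (hle_inr h1) (hle_inr h3))⟩
  · exact absurd (by rw [h1, h2]; rfl) h12
  · exact absurd (by rw [h1, h2]; rfl) h12
  · exact ⟨fun hu => hne (by simp) (by simp) (by simp) (h1.trans ((congrArg inl hu).trans h3.symm)),
      fun hw => hne (by simp) (by simp) (by simp) (h0.trans ((congrArg inr hw).trans h2.symm)),
      le_inf (le_inf (hle_inl h1) (hle_inl h3)) (le_inf (hle_inr h0) (hle_inr h2))⟩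

end IsAmalgam

end Amalgam

section BassSerreAction

variable {G : Type} [Group G] {A B : Subgroup G}

namespace IsAmalgam

/-- The action of a subgroup of an amalgamated product on the Bass–Serre tree. -/
def treeAction (h : IsAmalgam A B) (H : Subgroup G) : TreeAction H where
  V := (G ⧸ A) ⊕ (G ⧸ B)
  T := bassSerreGraph A B
  isTree := h.bassSerreGraph_isTree
  act := (bassSerreAction A B).comp H.subtype

theorem treeAction_withoutInversions (h : IsAmalgam A B) (H : Subgroup G) :
    (h.treeAction H).WithoutInversions := by
  rintro g x y hxy ⟨rfl, -⟩
  refine isLeft_ne_of_bassSerreGraph_adj hxy ?_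
  cases x <;> rfl

theorem exists_le_conjSubgroup_of_boundedOrbits (h : IsAmalgam A B) {H : Subgroup G}
    (hb : (h.treeAction H).BoundedOrbits) :
    ∃ g, H ≤ conjSubgroup g A ∨ H ≤ conjSubgroup g B := by
  obtain ⟨x, hx⟩ : ∃ x : (G ⧸ A) ⊕ (G ⧸ B), ∀ k : H, (k : G) • x = x :=
    TreeAction.fixesPoint_of_boundedOrbits (h.treeAction_withoutInversions H) hb
  have hH : H ≤ stabilizer G x := fun k hk => hx ⟨k, hk⟩
  rcases x with x | x <;> obtain ⟨g, rfl⟩ := QuotientGroup.mk_surjective x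
  · exact ⟨g, .inl (by rwa [stabilizer_inl, stabilizer_mk] at hH)⟩
  · exact ⟨g, .inr (by rwa [stabilizer_inr, stabilizer_mk] at hH)⟩

theorem treeAction_acylindrical (h : IsAmalgam A B) {H F : Subgroup G} (hfin : Finite F) (k : ℕ)
    (hF : ∀ x y, k ≤ (bassSerreGraph A B).dist x y →
      ∃ g, H ⊓ (stabilizer G x ⊓ stabilizer G y) ≤ conjSubgroup g F) :
    (h.treeAction H).Acylindrical := by
  refine ⟨k, Nat.card F, Nat.card_pos, fun x y hxy => ?_⟩
  obtain ⟨g, hg⟩ := hF x y hxy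
  have hmaps : Set.MapsTo (fun u : H => g⁻¹ * u * g)
      {u | (h.treeAction H).act u x = x ∧ (h.treeAction H).act u y = y} F :=
    fun u hu => mem_conjSubgroup.1 (hg ⟨u.2, hu⟩)
  have hinj : Function.Injective fun u : H => g⁻¹ * u * g := fun u v huv => by simpa using huv
  have hF_finite : (F : Set G).Finite := Set.toFinite _
  exact ⟨.of_injOn hmaps hinj.injOn hF_finite,
    Set.ncard_le_ncard_of_injOn _ hmaps hinj.injOn hF_finite⟩

end IsAmalgam

end BassSerreAction

/-! ### Graph products -/

namespace GraphProduct

variable {V : Type} {Γ : SimpleGraph V} {Gv : V → Type} [∀ v, Group (Gv v)] {A B S : Set V}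

section Lift

variable {N : Type*} [Group N] (f : ∀ v, Gv v →* N)
  (hf : ∀ u v, Γ.Adj u v → ∀ x y, Commute (f u x) (f v y))

/-- The homomorphism out of a graph product given by homomorphisms out of the vertex groups
that commute along the edges. -/
noncomputable def lift : GraphProduct Γ Gv →* N :=
  QuotientGroup.lift _ (Monoid.CoprodI.lift f) <| Subgroup.normalClosure_le_normal <| by
    rintro _ ⟨u, v, huv, x, y, rfl⟩
    simp [(hf u v huv x y).eq]

theorem lift_of (v : V) (x : Gv v) : lift f hf (of Γ Gv v x) = f v x :=
  Monoid.CoprodI.lift_of f x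

end Lift

theorem of_commute {u v : V} (h : Γ.Adj u v) (x : Gv u) (y : Gv v) :
    Commute (of Γ Gv u x) (of Γ Gv v y) := by
  have hrel := (QuotientGroup.eq_one_iff (N := Subgroup.normalClosure (graphProductRels Γ Gv)) _).2
    (Subgroup.subset_normalClosure ⟨u, v, h, x, y, rfl⟩)
  exact commutatorElement_eq_one_iff_commute.1 hrel

theorem of_mem_full {v : V} (hv : v ∈ S) (x : Gv v) : of Γ Gv v x ∈ full Γ Gv S :=
  le_iSup₂_of_le (f := fun v (_ : v ∈ S) => (of Γ Gv v).range) v hv le_rfl ⟨x, rfl⟩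

theorem full_le {P : Subgroup (GraphProduct Γ Gv)} (h : ∀ v ∈ S, ∀ x, of Γ Gv v x ∈ P) :
    full Γ Gv S ≤ P :=
  iSup₂_le fun v hv => by rintro _ ⟨x, rfl⟩; exact h v hv x

theorem full_mono (h : A ⊆ B) : full Γ Gv A ≤ full Γ Gv B :=
  full_le fun _ hv => of_mem_full (h hv)

variable (Γ Gv) in
theorem full_univ : full Γ Gv Set.univ = ⊤ := by
  refine (Subgroup.eq_top_iff' _).2 fun g => ?_
  obtain ⟨w, rfl⟩ := QuotientGroup.mk_surjective g
  induction w using Monoid.CoprodI.induction_on with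
  | one => exact one_mem _
  | of v x => exact of_mem_full (Set.mem_univ v) x
  | mul x y hx hy => exact mul_mem hx hy

variable (Γ Gv) in
theorem full_sup (h : A ∪ B = Set.univ) : full Γ Gv A ⊔ full Γ Gv B = ⊤ := by
  rw [eq_top_iff, ← full_univ, ← h]
  exact full_le fun v hv x => hv.elim (fun hv => Subgroup.mem_sup_left (of_mem_full hv x))
    fun hv => Subgroup.mem_sup_right (of_mem_full hv x)

/-- The canonical map of a vertex group into a full subgroup on a set containing the vertex. -/
def ofFull {v : V} (hv : v ∈ S) : Gv v →* full Γ Gv S :=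
  (of Γ Gv v).codRestrict _ (of_mem_full hv)

theorem ofFull_commute {u v : V} (h : Γ.Adj u v) (hu : u ∈ S) (hv : v ∈ S) (x : Gv u)
    (y : Gv v) : Commute (ofFull (Γ := Γ) hu x) (ofFull hv y) :=
  Subtype.ext (of_commute h x y)

theorem full_hom_ext {N : Type*} [Group N] {f f' : full Γ Gv S →* N}
    (h : ∀ v (hv : v ∈ S), f.comp (ofFull hv) = f'.comp (ofFull hv)) : f = f' := by
  have hle : full Γ Gv S ≤ (f.eqLocus f').map (full Γ Gv S).subtype :=
    full_le fun v hv x => ⟨ofFull hv x, congr($(h v hv) x), rfl⟩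
  ext ⟨g, hg⟩
  obtain ⟨_, hfg, rfl⟩ := hle hg
  exact hfg

variable (Γ Gv) in
open Classical in
/-- The retraction of a graph product onto the full subgroup on `S` that kills the vertex groups
outside `S`, as an endomorphism of the graph product. -/
noncomputable def retraction (S : Set V) : GraphProduct Γ Gv →* GraphProduct Γ Gv :=
  lift (fun v => if v ∈ S then of Γ Gv v else 1) fun u v h x y => by
    split_ifs <;> simp [of_commute h]

theorem retraction_mem {g : GraphProduct Γ Gv} (hg : g ∈ full Γ Gv A) :
    retraction Γ Gv S g ∈ full Γ Gv (S ∩ A) := by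
  have hle : full Γ Gv A ≤ (full Γ Gv (S ∩ A)).comap (retraction Γ Gv S) :=
    full_le fun v hv x => by
      rw [Subgroup.mem_comap, retraction, lift_of]
      split_ifs with hS
      · exact of_mem_full (S := S ∩ A) ⟨hS, hv⟩ x
      · exact one_mem _
  exact hle hg

theorem retraction_eq_self {g : GraphProduct Γ Gv} (hg : g ∈ full Γ Gv S) :
    retraction Γ Gv S g = g := by
  have hle : full Γ Gv S ≤ (retraction Γ Gv S).eqLocus (MonoidHom.id _) :=
    full_le fun v hv x => by
      change retraction Γ Gv S (of Γ Gv v x) = of Γ Gv v x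
      rw [retraction, lift_of, if_pos hv]
  exact hle hg

theorem full_inf : full Γ Gv A ⊓ full Γ Gv B = full Γ Gv (A ∩ B) :=
  le_antisymm (fun _ hg => retraction_eq_self hg.1 ▸ retraction_mem hg.2)
    (le_inf (full_mono Set.inter_subset_left) (full_mono Set.inter_subset_right))

theorem exists_conjSubgroup_full_inf_le (A B : Set V) (p q : GraphProduct Γ Gv) :
    ∃ r, conjSubgroup p (full Γ Gv A) ⊓ conjSubgroup q (full Γ Gv B) ≤
      conjSubgroup r (full Γ Gv (A ∩ B)) := by
  refine ⟨p * retraction Γ Gv A (p⁻¹ * q), fun g ⟨hp, hq⟩ => ?_⟩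
  replace hp := mem_conjSubgroup.1 hp
  replace hq := mem_conjSubgroup.1 hq
  have hretr : retraction Γ Gv A (q⁻¹ * g * q) =
      (retraction Γ Gv A (p⁻¹ * q))⁻¹ * (p⁻¹ * g * p) * retraction Γ Gv A (p⁻¹ * q) := by
    rw [show q⁻¹ * g * q = (p⁻¹ * q)⁻¹ * (p⁻¹ * g * p) * (p⁻¹ * q) by group, map_mul, map_mul,
      map_inv, retraction_eq_self hp]
  have hmem := retraction_mem (S := A) hq
  rw [hretr] at hmem
  simpa only [mem_conjSubgroup, mul_assoc, mul_inv_rev] using hmem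

open Classical in
theorem exists_lift_full {N : Type*} [Group N] (hAB : A ∪ B = Set.univ)
    (hΓ : ∀ u v, Γ.Adj u v → u ∈ A ∧ v ∈ A ∨ u ∈ B ∧ v ∈ B) (f : full Γ Gv A →* N)
    (f' : full Γ Gv B →* N)
    (hff' : ∀ v (hA : v ∈ A) (hB : v ∈ B), f.comp (ofFull hA) = f'.comp (ofFull hB)) :
    ∃ F : GraphProduct Γ Gv →* N,
      F.comp (full Γ Gv A).subtype = f ∧ F.comp (full Γ Gv B).subtype = f' := by
  have hB {v} (hv : v ∉ A) : v ∈ B := (hAB.ge (Set.mem_univ v)).resolve_left hv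
  let F (v : V) : Gv v →* N :=
    if hv : v ∈ A then f.comp (ofFull hv) else f'.comp (ofFull (hB hv))
  have hFA {v} (hv : v ∈ A) : F v = f.comp (ofFull hv) := dif_pos hv
  have hFB {v} (hv : v ∈ B) : F v = f'.comp (ofFull hv) := by
    by_cases hvA : v ∈ A
    · rw [hFA hvA, hff' v hvA hv]
    · exact dif_neg hvA
  have hcomm u v (huv : Γ.Adj u v) (x : Gv u) (y : Gv v) : Commute (F u x) (F v y) := by
    rcases hΓ u v huv with ⟨hu, hv⟩ | ⟨hu, hv⟩
    · rw [hFA hu, hFA hv]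
      exact (ofFull_commute huv hu hv x y).map f
    · rw [hFB hu, hFB hv]
      exact (ofFull_commute huv hu hv x y).map f'
  exact ⟨lift F hcomm,
    full_hom_ext fun v hv => (MonoidHom.ext (lift_of F hcomm v)).trans (hFA hv),
    full_hom_ext fun v hv => (MonoidHom.ext (lift_of F hcomm v)).trans (hFB hv)⟩

theorem isAmalgam_full (hAB : A ∪ B = Set.univ)
    (hΓ : ∀ u v, Γ.Adj u v → u ∈ A ∧ v ∈ A ∨ u ∈ B ∧ v ∈ B) :
    IsAmalgam (full Γ Gv A) (full Γ Gv B) where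
  sup_eq_top := full_sup Γ Gv hAB
  exists_lift f f' hff' := exists_lift_full hAB hΓ f f' fun v hA hB => by
    ext x
    exact congr($hff' ⟨of Γ Gv v x, of_mem_full hA x, of_mem_full hB x⟩)

theorem isAmalgam_full_compl_of_not_adj {a b : V} (hab : a ≠ b) (hnadj : ¬ Γ.Adj a b) :
    IsAmalgam (full Γ Gv {a}ᶜ) (full Γ Gv {b}ᶜ) := by
  refine isAmalgam_full (Set.eq_univ_of_forall fun v => ?_) fun u v huv => ?_
  · by_cases h : v = a <;> simp [h, hab]
  · by_contra! hcon
    grind [huv.symm, huv.ne]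

theorem isAmalgam_full_compl_star (Γ : SimpleGraph V) (v : V) :
    IsAmalgam (full Γ Gv {v}ᶜ) (full Γ Gv (insert v (Γ.neighborSet v))) := by
  refine isAmalgam_full (Set.eq_univ_of_forall fun u => ?_) fun u w huw => ?_
  · by_cases h : u = v <;> simp [h]
  · by_cases hu : u = v
    · subst hu; simp [huw]
    · by_cases hw : w = v
      · subst hw; simp [huw.symm]
      · simp [hu, hw]

theorem exists_stabilizer_inf_stabilizer_le_conjSubgroup_full {v : V}
    {x y : GraphProduct Γ Gv ⧸ full Γ Gv {v}ᶜ} (hxy : x ≠ y) :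
    ∃ g, stabilizer _ x ⊓ stabilizer _ y ≤ conjSubgroup g (full Γ Gv (Γ.neighborSet v)) := by
  have hlink : ({v}ᶜ ∩ insert v (Γ.neighborSet v) : Set V) = Γ.neighborSet v := by
    ext u; by_cases h : u = v <;> simp [h]
  simpa only [full_inf, hlink] using
    (isAmalgam_full_compl_star Γ v).exists_stabilizer_inf_stabilizer_le_conjSubgroup hxy

end GraphProduct

theorem subgroup_of_graphProduct_acylindricallyArboreal_general {V : Type}
    (Γ : SimpleGraph V) (Gv : V → Type) [∀ v, Group (Gv v)]
    (H : Subgroup (GraphProduct Γ Gv)) (S : Set V)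
    (hS : GraphProduct.IsEssentialSupport Γ Gv H S)
    (a b : V) (ha : a ∈ S) (hb : b ∈ S) (hab : a ≠ b) (hnadj : ¬ Γ.Adj a b)
    (hfin : Finite (GraphProduct.full Γ Gv (Γ.neighborSet a ∩ Γ.neighborSet b ∩ S))) :
    AcylindricallyArboreal H ∨ IsVirtuallyCyclic H := by
  have hsplit := GraphProduct.isAmalgam_full_compl_of_not_adj (Gv := Gv) hab hnadj
  refine or_iff_not_imp_right.2 fun hvc => ⟨hsplit.treeAction H, ?_, fun hbdd => ?_, hvc⟩
  · refine hsplit.treeAction_acylindrical hfin 3 fun x y hxy => ?_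
    obtain ⟨u, u', w, w', hu, hw, hle⟩ := hsplit.exists_ne_stabilizer_le_of_three_le_dist hxy
    obtain ⟨p, hp⟩ := GraphProduct.exists_stabilizer_inf_stabilizer_le_conjSubgroup_full hu
    obtain ⟨q, hq⟩ := GraphProduct.exists_stabilizer_inf_stabilizer_le_conjSubgroup_full hw
    obtain ⟨g, hg⟩ := hS.1
    obtain ⟨r, hr⟩ := GraphProduct.exists_conjSubgroup_full_inf_le _ _ p q
    obtain ⟨r', hr'⟩ := GraphProduct.exists_conjSubgroup_full_inf_le _ _ r g
    refine ⟨r', ?_⟩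
    calc H ⊓ (stabilizer _ x ⊓ stabilizer _ y)
      _ ≤ (conjSubgroup p _ ⊓ conjSubgroup q _) ⊓ conjSubgroup g _ :=
        le_inf (inf_le_right.trans (hle.trans (inf_le_inf hp hq))) (inf_le_left.trans hg)
      _ ≤ conjSubgroup r _ ⊓ conjSubgroup g _ := inf_le_inf_right _ hr
      _ ≤ conjSubgroup r' _ := hr'
  · obtain ⟨g, hH | hH⟩ := hsplit.exists_le_conjSubgroup_of_boundedOrbits hbdd
    · exact hS.2 _ g hH ha rfl
    · exact hS.2 _ g hH hb rfl

/-- If the sub-graph product induced by the essential support of a subgroup `H` of a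
non-degenerate graph product contains a pair of separated vertices, then `H` is
acylindrically arboreal or virtually cyclic. Here `a, b ∈ S` are separated with
respect to the sub-graph product on `S` when they are non-adjacent and distinct and
the full subgroup on their common link within `S` is finite. -/
theorem subgroup_of_graphProduct_acylindricallyArboreal {V : Type} [Fintype V]
    (Γ : SimpleGraph V) (Gv : V → Type) [∀ v, Group (Gv v)]
    (hnd : GraphProduct.NonDegenerate Gv)
    (H : Subgroup (GraphProduct Γ Gv)) (S : Set V)
    (hS : GraphProduct.IsEssentialSupport Γ Gv H S)
    (a b : V) (ha : a ∈ S) (hb : b ∈ S) (hab : a ≠ b) (hnadj : ¬ Γ.Adj a b)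
    (hfin : Finite (GraphProduct.full Γ Gv (Γ.neighborSet a ∩ Γ.neighborSet b ∩ S))) :
    AcylindricallyArboreal H ∨ IsVirtuallyCyclic H :=
  subgroup_of_graphProduct_acylindricallyArboreal_general Γ Gv H S hS a b ha hb hab hnadj hfin
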